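/- arXiv:math/0310124 — 2 statements merged into one kernel-verified Lean document; each statement's English description precedes it below -/
import Mathlib

section
/- (Proposition 4, part) If exactly one of n, p is zero (say p = 0 and n ≥ 1, or n = 0 and p ≥ 1), then the scalar curvature function s : ℝ × (0,∞) → ℝ has no critical point: its total (Fréchet) derivative is nonzero at every point (a,c) with c > 0. Consequently there is no U(n+1) × U(p+1)-invariant metric g(a,c) with Hermitian Ricci tensor in this case. -/
/-- The scalar curvature `s(a,c) = 4n(1 + n - 1/(2c)) + 4p(1 + p - (a²+c²)/(2c))` of the
family of invariant metrics `g(a,c)` on `S^{2n+1} × S^{2p+1}`, as a function of the point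
`(a, c) ∈ ℝ × (0,∞)`. -/
noncomputable def s (n p : ℕ) : ℝ × ℝ → ℝ := fun x =>
  4 * n * (1 + (n : ℝ) - 1 / (2 * x.2)) + 4 * p * (1 + (p : ℝ) - (x.1 ^ 2 + x.2 ^ 2) / (2 * x.2))

theorem smul_fst_add_smul_snd_eq_zero_iff {R : Type*} [CommSemiring R] [TopologicalSpace R]
    [IsTopologicalSemiring R] {α β : R} :
    α • ContinuousLinearMap.fst R R R + β • ContinuousLinearMap.snd R R R = 0 ↔
      α = 0 ∧ β = 0 := by
  constructor
  · intro hzero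
    exact ⟨by simpa using DFunLike.congr_fun hzero (1, 0),
      by simpa using DFunLike.congr_fun hzero (0, 1)⟩
  · rintro ⟨rfl, rfl⟩
    ext <;> simp

theorem hasFDerivAt_s (n p : ℕ) (a : ℝ) {c : ℝ} (hc : c ≠ 0) :
    HasFDerivAt (s n p)
      ((-(4 * p * a / c)) • ContinuousLinearMap.fst ℝ ℝ ℝ +
        ((2 * n + 2 * p * (a ^ 2 - c ^ 2)) / c ^ 2) • ContinuousLinearMap.snd ℝ ℝ ℝ) (a, c) := by
  have hfst : HasFDerivAt Prod.fst (ContinuousLinearMap.fst ℝ ℝ ℝ) (a, c) := hasFDerivAt_fst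
  have hsnd : HasFDerivAt Prod.snd (ContinuousLinearMap.snd ℝ ℝ ℝ) (a, c) := hasFDerivAt_snd
  have hinv : HasFDerivAt (fun x : ℝ × ℝ => (2 * x.2)⁻¹)
      ((-(2 * c ^ 2)⁻¹) • ContinuousLinearMap.snd ℝ ℝ ℝ) (a, c) := by
    refine ((hasDerivAt_inv (mul_ne_zero two_ne_zero hc)).comp_hasFDerivAt (a, c)
      (hsnd.const_mul 2)).congr_fderiv ?_
    match_scalars
    field_simp
  have hquot : HasFDerivAt (fun x : ℝ × ℝ => (x.1 ^ 2 + x.2 ^ 2) / (2 * x.2))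
      ((a / c) • ContinuousLinearMap.fst ℝ ℝ ℝ +
        ((c ^ 2 - a ^ 2) / (2 * c ^ 2)) • ContinuousLinearMap.snd ℝ ℝ ℝ) (a, c) := by
    refine (((hfst.pow 2).fun_add (hsnd.pow 2)).fun_mul hinv).congr_fderiv ?_
    match_scalars <;> field_simp <;> ring
  simp only [← one_div] at hinv
  refine (((hinv.const_sub (1 + (n : ℝ))).const_mul (4 * n : ℝ)).add
    ((hquot.const_sub (1 + (p : ℝ))).const_mul (4 * p : ℝ))).congr_fderiv ?_
  match_scalars <;> field_simp
  ring

theorem hasFDerivAt_s_zero_iff (n p : ℕ) (a : ℝ) {c : ℝ} (hc : c ≠ 0) :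
    HasFDerivAt (s n p) (0 : ℝ × ℝ →L[ℝ] ℝ) (a, c) ↔ p * a = 0 ∧ (n : ℝ) = p * c ^ 2 := by
  have hgrad := hasFDerivAt_s n p a hc
  have hcrit_iff : HasFDerivAt (s n p) 0 (a, c) ↔ _ := ⟨hgrad.unique, hgrad.congr_fderiv⟩
  rw [hcrit_iff, smul_fst_add_smul_snd_eq_zero_iff, neg_eq_zero, div_eq_zero_iff, div_eq_zero_iff,
    or_iff_left hc, or_iff_left (pow_ne_zero 2 hc)]
  constructor
  · rintro ⟨hfst, hsnd⟩
    exact ⟨by linear_combination hfst / 4, by linear_combination hsnd / 2 - a / 4 * hfst⟩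
  · rintro ⟨hpa, hnp⟩
    exact ⟨by linear_combination 4 * hpa, by linear_combination 2 * hnp + 2 * a * hpa⟩

/-- Proposition 4 (part): if exactly one of `n, p` is zero, then the scalar curvature
function `s` has no critical point: its total (Fréchet) derivative is nonzero at every
point `(a, c)` with `c > 0`.  Consequently there is no `U(n+1) × U(p+1)`-invariant metric
`g(a,c)` with Hermitian Ricci tensor in this case. -/
theorem stmt16 (n p : ℕ) (h : (n = 0 ∧ 1 ≤ p) ∨ (p = 0 ∧ 1 ≤ n)) :
    ∀ a c : ℝ, 0 < c → ¬ HasFDerivAt (s n p) (0 : ℝ × ℝ →L[ℝ] ℝ) (a, c) := by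
  intro a c hc hcrit
  obtain ⟨-, hnp⟩ := (hasFDerivAt_s_zero_iff n p a hc.ne').mp hcrit
  rcases h with ⟨rfl, hp⟩ | ⟨rfl, hn⟩
  · have hpos : (0 : ℝ) < p * c ^ 2 := by positivity
    exact hpos.ne (by simpa using hnp)
  · have hn_zero : n = 0 := by simpa using hnp
    omega
end

section
/- (Proposition 4, part) If n ≥ 1 and p ≥ 1, then for all (a,c) ∈ ℝ × (0,∞) one has s(a,c) ≤ 4n(n+1) + 4p(1+p) − 4√(n·p), with equality if and only if a = 0 and c = √(n/p); that is, s attains its strict global maximum 4n(n+1) + 4p(1+p) − 4√(np) exactly at the point (a,c) = (0, √(n/p)). -/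
/-!
Put `r = √(n/p)`, so that `n = p r²` and `√(np) = p r`. Up to an additive constant, `-s(a,c) / 2` is
`n/c + p (a² + c²)/c`, and completing the square in `c` turns this into
`2 √(np) + (p/c) (a² + (c - r)²)`.
-/

theorem sqrt_mul_eq_mul_sqrt_div (x : ℝ) {y : ℝ} (hy : 0 ≤ y) : √(x * y) = y * √(x / y) := by
  rw [Real.sqrt_mul' x hy, Real.sqrt_div' x hy, mul_div_left_comm, Real.div_sqrt]

theorem div_add_mul_sq_add_sq_div_eq {x y : ℝ} (hx : 0 ≤ x) (hy : 0 < y) (a : ℝ) {c : ℝ}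
    (hc : c ≠ 0) :
    x / c + y * ((a ^ 2 + c ^ 2) / c) = 2 * √(x * y) + y / c * (a ^ 2 + (c - √(x / y)) ^ 2) := by
  have x_eq : x = y * √(x / y) ^ 2 := by
    rw [Real.sq_sqrt (by positivity), mul_div_cancel₀ x hy.ne']
  calc x / c + y * ((a ^ 2 + c ^ 2) / c)
      = y * √(x / y) ^ 2 / c + y * ((a ^ 2 + c ^ 2) / c) := by rw [← x_eq]
    _ = 2 * (y * √(x / y)) + y / c * (a ^ 2 + (c - √(x / y)) ^ 2) := by
      field_simp
      ring
    _ = 2 * √(x * y) + y / c * (a ^ 2 + (c - √(x / y)) ^ 2) := by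
      rw [sqrt_mul_eq_mul_sqrt_div x hy.le]

theorem s_eq_sub_mul_sq_add_sq (n : ℕ) {p : ℕ} (hp : 0 < p) (a : ℝ) {c : ℝ} (hc : c ≠ 0) :
    s n p (a, c) = 4 * n * (n + 1) + 4 * p * (1 + (p : ℝ)) - 4 * √((n : ℝ) * p)
      - 2 * (p / c * (a ^ 2 + (c - √((n : ℝ) / p)) ^ 2)) := by
  have s_eq : s n p (a, c) = 4 * n * (n + 1) + 4 * p * (1 + (p : ℝ))
      - 2 * (n / c + p * ((a ^ 2 + c ^ 2) / c)) := by
    simp only [s]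
    field_simp
    ring
  rw [s_eq, div_add_mul_sq_add_sq_div_eq n.cast_nonneg (Nat.cast_pos.mpr hp) a hc]
  ring

/-- Proposition 4 (part): if `n ≥ 1` and `p ≥ 1`, then for all `(a,c) ∈ ℝ × (0,∞)`,
`s(a,c) ≤ 4n(n+1) + 4p(1+p) - 4√(np)`, with equality iff `a = 0` and `c = √(n/p)`;
i.e. `s` attains its strict global maximum exactly at `(0, √(n/p))`. -/
theorem stmt17 (n p : ℕ) (hn : 1 ≤ n) (hp : 1 ≤ p) :
    ∀ a c : ℝ, 0 < c →
      s n p (a, c) ≤ 4 * n * (n + 1) + 4 * p * (1 + (p : ℝ)) - 4 * Real.sqrt ((n : ℝ) * p) ∧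
      (s n p (a, c) = 4 * n * (n + 1) + 4 * p * (1 + (p : ℝ)) - 4 * Real.sqrt ((n : ℝ) * p) ↔
        a = 0 ∧ c = Real.sqrt ((n : ℝ) / p)) := by
  intro a c hc
  have weight_pos : 0 < (p : ℝ) / c := div_pos (Nat.cast_pos.mpr hp) hc
  rw [s_eq_sub_mul_sq_add_sq n hp a hc.ne']
  constructor
  · exact sub_le_self _ (by positivity)
  · rw [sub_eq_self, mul_eq_zero_iff_left two_ne_zero, mul_eq_zero_iff_left weight_pos.ne',
      add_eq_zero_iff_of_nonneg (sq_nonneg _) (sq_nonneg _), sq_eq_zero_iff, sq_eq_zero_iff,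
      sub_eq_zero]
end
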